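/- Let R be a commutative Noetherian ring, J ⊆ R an ideal, and N an R-module. Let R[t] be the polynomial ring in one variable, N[t] = N ⊗_R R[t], and let J̃ = J·R[t] + (t) ⊆ R[t]. Then H⁰_{J̃}(N[t]) = 0, and for every s ≥ 1 there is an isomorphism of R[t]-modules H^s_{J̃}(N[t]) ≅ H^{s−1}_J(N) ⊗_ℤ (ℤ[t, t⁻¹]/ℤ[t]), where t acts on the second tensor factor and J acts on the first. -/

import Mathlib

open CategoryTheory

noncomputable section

universe u

/-- `ℤ[t,t⁻¹]/ℤ[t]`: the cokernel of the inclusion of `ℤ[t]` into the ring of Laurent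
polynomials; it is the free `ℤ`-module on `t^{-k}` for `k ≥ 1`, with `t` acting by
shift (truncating at `t⁰`). -/
abbrev LaurentQuot : Type :=
  LaurentPolynomial ℤ ⧸
    LinearMap.range (Algebra.linearMap (Polynomial ℤ) (LaurentPolynomial ℤ))

/-!
Write `H^s_I` as `colim Ext^s(A/Iⁿ, -)`; it has long exact sequences and vanishes in positive
degrees on injective modules. On a module where an element of `I` acts invertibly it vanishes
altogether, so the short exact sequence `0 → N[t] → N[t, t⁻¹] → N[t⁻¹] → 0` of `R[t]`-modules
gives `H⁰_{J̃}(N[t]) = 0` and `H^{s+1}_{J̃}(N[t]) ≅ H^s_{J̃}(N[t⁻¹])`.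

It remains to see `H^s_{J̃}(M[t⁻¹]) ≅ H^s_J(M)[t⁻¹]`. In degree `0` both sides are the `J`-power
torsion of `M`, taken coefficientwise. Higher degrees follow by dimension shifting along
`0 → M → E → C → 0` with `E` injective, once `E[t⁻¹]` is known to be acyclic: it is a submodule of
`E⟦t⁻¹⟧ = Hom_R(R[t], E)`, which is injective, and `t` acts bijectively on the quotient.
-/

open Limits Opposite

section ExtComparison

universe v w

variable {R : Type*} [CommRing R] {C : Type*} [Category.{v} C] [Abelian C] [Linear R C]
  {X X' : C} (P : ProjectiveResolution X) (P' : ProjectiveResolution X') (n : ℕ) (Y : C)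

variable (R) in
/-- The cocycles of degree `n` in the complex `Hom(P, Y)`. Both versions of `Ext` in Mathlib, the
derived functor `Ext` and `Abelian.Ext`, are quotients of this module. -/
def extCocycles : Submodule R (P.complex.X n ⟶ Y) :=
  LinearMap.ker (Linear.leftComp R Y (P.complex.d (n + 1) n))

namespace extCocycles

variable {P n Y} in
lemma mem_iff {f : P.complex.X n ⟶ Y} :
    f ∈ extCocycles R P n Y ↔ P.complex.d (n + 1) n ≫ f = 0 := Iff.rfl

/-- The pullback of cocycles along a morphism of projective resolutions. -/
def comap {P : ProjectiveResolution X} {P' : ProjectiveResolution X'} {g : X' ⟶ X}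
    (φ : ProjectiveResolution.Hom P' P g) {n : ℕ} {Y : C} (f : extCocycles R P n Y) :
    extCocycles R P' n Y :=
  ⟨φ.hom.f n ≫ f.1, by
    rw [mem_iff, ← φ.hom.comm_assoc, mem_iff.1 f.2, comp_zero]⟩

section AbelianExt

variable [HasExt.{w} C]

/-- The class of a cocycle in `Abelian.Ext`. -/
def toAbelianExt : extCocycles R P n Y →ₗ[R] Abelian.Ext X Y n where
  toFun f := P.extMk f.1 (n + 1) rfl (mem_iff.1 f.2)
  map_add' _ _ := (P.add_extMk _ _ _ _ _ _).symm
  map_smul' r f := by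
    rw [RingHom.id_apply, Abelian.Ext.smul_eq_comp_mk₀, P.extMk_comp_mk₀]
    congr 1
    simp

lemma toAbelianExt_surjective : Function.Surjective (toAbelianExt (R := R) P n Y) := fun x ↦ by
  obtain ⟨f, hf, rfl⟩ := P.extMk_surjective x (n + 1) rfl
  exact ⟨⟨f, hf⟩, rfl⟩

lemma toAbelianExt_zero_injective : Function.Injective (toAbelianExt (R := R) P 0 Y) := by
  refine (injective_iff_map_eq_zero _).2 fun f hf ↦ Subtype.ext ?_
  change P.extMk f.1 1 rfl (mem_iff.1 f.2) = 0 at hf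
  rw [← P.extEquivCohomologyClass.apply_eq_iff_eq,
    ProjectiveResolution.extEquivCohomologyClass_extMk,
    ProjectiveResolution.extEquivCohomologyClass_zero,
    CochainComplex.HomComplex.CohomologyClass.mk_eq_zero_iff,
    CochainComplex.HomComplex.Cocycle.toSingleMk_mem_coboundaries_iff _ _ _ _ _ 1 (by simp)] at hf
  obtain ⟨g, hg⟩ := hf
  have isZero_X_one : IsZero (P.cochainComplex.X 1) :=
    CochainComplex.isZero_of_isStrictlyLE _ 0 1 (by simp)
  rwa [isZero_X_one.eq_of_src g 0, comp_zero, eq_comm,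
    Preadditive.IsIso.comp_left_eq_zero] at hg

lemma toAbelianExt_eq_zero_iff (f : extCocycles R P n Y) : toAbelianExt P n Y f = 0 ↔
    ∃ g : P.complex.X ((ComplexShape.down ℕ).next n) ⟶ Y, P.complex.d n _ ≫ g = f.1 := by
  cases n with
  | zero =>
    rw [(toAbelianExt_zero_injective P Y).eq_iff' (map_zero _), P.complex.shape _ _ (by simp)]
    simp only [zero_comp, exists_const, Subtype.ext_iff, Submodule.coe_zero]
    exact eq_comm
  | succ n =>
    rw [show (ComplexShape.down ℕ).next (n + 1) = n by simp]
    exact P.extMk_eq_zero_iff _ _ rfl (mem_iff.1 f.2) _ rfl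

variable {P P' n Y} in
lemma mk₀_comp_toAbelianExt {g : X' ⟶ X} (φ : ProjectiveResolution.Hom P' P g)
    (f : extCocycles R P n Y) :
    (Abelian.Ext.mk₀ g).comp (toAbelianExt P n Y f) (zero_add _) =
      toAbelianExt P' n Y (comap φ f) :=
  ProjectiveResolution.mk₀_comp_extMk f.1 _ rfl f.2 φ

end AbelianExt

section DerivedExt

lemma iCycles_injective : Function.Injective ((P.complex.linearYonedaObj R Y).iCycles n) :=
  (ModuleCat.mono_iff_injective _).1 inferInstance

/-- The tautological map from cocycles to the abstract cycles of the complex `Hom(P, Y)`. -/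
def toCycles : ModuleCat.of R (extCocycles R P n Y) ⟶ (P.complex.linearYonedaObj R Y).cycles n :=
  (P.complex.linearYonedaObj R Y).liftCycles
    (ModuleCat.ofHom (extCocycles R P n Y).subtype) (n + 1) (by simp) (by ext f; exact f.2)

variable {P n Y} in
lemma iCycles_toCycles (f : extCocycles R P n Y) :
    (P.complex.linearYonedaObj R Y).iCycles n (toCycles P n Y f) = f.1 :=
  congr($((P.complex.linearYonedaObj R Y).liftCycles_i
    (ModuleCat.ofHom (extCocycles R P n Y).subtype) (n + 1) (by simp) (by ext f; exact f.2)) f)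

lemma toCycles_surjective : Function.Surjective (toCycles (R := R) P n Y) := fun z ↦ by
  have hz : (P.complex.linearYonedaObj R Y).iCycles n z ∈ extCocycles R P n Y :=
    congr($((P.complex.linearYonedaObj R Y).iCycles_d n (n + 1)) z)
  exact ⟨⟨_, hz⟩, iCycles_injective P n Y (iCycles_toCycles ⟨_, hz⟩)⟩

lemma homologyπ_toCycles_eq_zero_iff (f : extCocycles R P n Y) :
    (P.complex.linearYonedaObj R Y).homologyπ n (toCycles P n Y f) = 0 ↔
      ∃ g : P.complex.X ((ComplexShape.down ℕ).next n) ⟶ Y, P.complex.d n _ ≫ g = f.1 := by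
  let K := P.complex.linearYonedaObj R Y
  have exact_toCycles : Function.Exact (K.toCycles _ n) (K.homologyπ n) :=
    (ShortComplex.ShortExact.moduleCat_exact_iff_function_exact _).1
      (ShortComplex.exact_of_g_is_cokernel
        (ShortComplex.mk _ _ (K.toCycles_comp_homologyπ _ n)) (K.homologyIsCokernel _ n rfl))
  refine (exact_toCycles _).trans (exists_congr fun g ↦ ?_)
  rw [← (iCycles_injective P n Y).eq_iff, iCycles_toCycles]
  exact Eq.congr congr($(K.toCycles_i _ n) g) rfl

/-- The chain map `Hom(P, Y) ⟶ Hom(P', Y)` induced by a chain map `P' ⟶ P`. -/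
def linearYonedaMap {K K' : ChainComplex C ℕ} (φ : K' ⟶ K) (Y : C) :
    K.linearYonedaObj R Y ⟶ K'.linearYonedaObj R Y :=
  (HomologicalComplex.unopFunctor _ _).map
    ((((linearYoneda R C).obj Y).rightOp.mapHomologicalComplex (ComplexShape.down ℕ)).map φ).op

variable {P P' n Y} in
lemma cyclesMap_toCycles {g : X' ⟶ X} (φ : ProjectiveResolution.Hom P' P g)
    (f : extCocycles R P n Y) :
    HomologicalComplex.cyclesMap (linearYonedaMap φ.hom Y) n (toCycles P n Y f) =
      toCycles P' n Y (comap φ f) := by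
  apply iCycles_injective P' n Y
  rw [iCycles_toCycles]
  refine congr($(HomologicalComplex.cyclesMap_i (linearYonedaMap φ.hom Y) n) _).trans ?_
  exact congrArg (φ.hom.f n ≫ ·) (iCycles_toCycles f)

variable [EnoughProjectives C]

/-- The class of a cocycle in the derived functor `Ext`. -/
def toDerivedExt : extCocycles R P n Y →ₗ[R] ((Ext R C n).obj (op X)).obj Y :=
  (toCycles P n Y ≫ HomologicalComplex.homologyπ _ n ≫ (P.isoExt n Y).inv).hom

lemma toDerivedExt_surjective : Function.Surjective (toDerivedExt (R := R) P n Y) :=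
  have : Epi (HomologicalComplex.homologyπ _ n ≫ (P.isoExt (R := R) n Y).inv) := epi_comp _ _
  ((ModuleCat.epi_iff_surjective _).1 this).comp (toCycles_surjective P n Y)

lemma toDerivedExt_eq_zero_iff (f : extCocycles R P n Y) : toDerivedExt P n Y f = 0 ↔
    ∃ g : P.complex.X ((ComplexShape.down ℕ).next n) ⟶ Y, P.complex.d n _ ≫ g = f.1 := by
  have isoExt_inv_injective : Function.Injective (P.isoExt (R := R) n Y).inv :=
    (ModuleCat.mono_iff_injective _).1 inferInstance
  rw [← homologyπ_toCycles_eq_zero_iff]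
  exact isoExt_inv_injective.eq_iff' (map_zero _)

variable {P P' n Y}

lemma homologyMap_comp_isoExt_inv {g : X' ⟶ X}
    (φ : ProjectiveResolution.Hom P' P g) :
    HomologicalComplex.homologyMap (linearYonedaMap (R := R) φ.hom Y) n ≫ (P'.isoExt n Y).inv =
      (P.isoExt n Y).inv ≫ ((Ext R C n).map g.op).app Y := by
  let F := ((linearYoneda R C).obj Y).rightOp
  let Fφ := (F.mapHomologicalComplex (ComplexShape.down ℕ)).map φ.hom
  have homologyOp_naturality :
      HomologicalComplex.homologyMap (linearYonedaMap (R := R) φ.hom Y) n ≫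
          ((P'.complex.linearYonedaObj R Y).homologyOp n).hom.unop =
        ((P.complex.linearYonedaObj R Y).homologyOp n).hom.unop ≫
          (HomologicalComplex.homologyMap Fφ n).unop :=
    congr($(HomologicalComplex.homologyOp_hom_naturality (linearYonedaMap φ.hom Y) n).unop).symm
  have leftDerived_naturality :
      (HomologicalComplex.homologyMap Fφ n).unop ≫ (P'.isoLeftDerivedObj F n).hom.unop =
        (P.isoLeftDerivedObj F n).hom.unop ≫ ((F.leftDerived n).map g).unop :=
    congr($(P'.isoLeftDerivedObj_hom_naturality g P φ.hom
      (by simpa using φ.hom_f_zero_comp_π_f_zero) F n).unop).symm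
  calc
    _ = (HomologicalComplex.homologyMap (linearYonedaMap φ.hom Y) n ≫
          ((P'.complex.linearYonedaObj R Y).homologyOp n).hom.unop) ≫
            (P'.isoLeftDerivedObj F n).hom.unop := (Category.assoc _ _ _).symm
    _ = ((P.complex.linearYonedaObj R Y).homologyOp n).hom.unop ≫
          (HomologicalComplex.homologyMap Fφ n).unop ≫ (P'.isoLeftDerivedObj F n).hom.unop :=
      (congrArg (· ≫ _) homologyOp_naturality).trans (Category.assoc _ _ _)
    _ = ((P.complex.linearYonedaObj R Y).homologyOp n).hom.unop ≫
          (P.isoLeftDerivedObj F n).hom.unop ≫ ((F.leftDerived n).map g).unop :=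
      congrArg (_ ≫ ·) leftDerived_naturality
    _ = _ := (Category.assoc _ _ _).symm

lemma map_app_toDerivedExt {g : X' ⟶ X} (φ : ProjectiveResolution.Hom P' P g)
    (f : extCocycles R P n Y) :
    ((Ext R C n).map g.op).app Y (toDerivedExt P n Y f) = toDerivedExt P' n Y (comap φ f) := by
  refine (congr($(homologyMap_comp_isoExt_inv φ) _)).symm.trans ?_
  refine congrArg (P'.isoExt (R := R) n Y).inv ?_
  refine congr($(HomologicalComplex.homologyπ_naturality (linearYonedaMap φ.hom Y) n) _).trans ?_
  exact congrArg ((P'.complex.linearYonedaObj R Y).homologyπ n) (cyclesMap_toCycles φ f)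

end DerivedExt

end extCocycles

/-- The two versions of `Ext` in Mathlib agree. -/
def abelianExtEquivExt [EnoughProjectives C] [HasExt.{w} C] :
    Abelian.Ext X Y n ≃ₗ[R] ((Ext R C n).obj (op X)).obj Y :=
  ((extCocycles.toAbelianExt P n Y).quotKerEquivOfSurjective
      (extCocycles.toAbelianExt_surjective P n Y)).symm ≪≫ₗ
    Submodule.quotEquivOfEq _ _ (by
      ext f
      exact (extCocycles.toAbelianExt_eq_zero_iff P n Y f).trans
        (extCocycles.toDerivedExt_eq_zero_iff P n Y f).symm) ≪≫ₗ
    (extCocycles.toDerivedExt P n Y).quotKerEquivOfSurjective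
      (extCocycles.toDerivedExt_surjective P n Y)

variable [EnoughProjectives C] [HasExt.{w} C] {P P' n Y}

lemma abelianExtEquivExt_toAbelianExt (f : extCocycles R P n Y) :
    abelianExtEquivExt P n Y (extCocycles.toAbelianExt P n Y f) =
      extCocycles.toDerivedExt P n Y f := by
  simp only [abelianExtEquivExt, LinearEquiv.trans_apply]
  rw [(LinearEquiv.symm_apply_eq _).2 (LinearMap.quotKerEquivOfSurjective_apply_mk _ _ _).symm]
  rfl

lemma map_app_abelianExtEquivExt (g : X' ⟶ X) (x : Abelian.Ext X Y n) :
    ((Ext R C n).map g.op).app Y (abelianExtEquivExt P n Y x) =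
      abelianExtEquivExt P' n Y ((Abelian.Ext.mk₀ g).comp x (zero_add _)) := by
  obtain ⟨f, rfl⟩ := extCocycles.toAbelianExt_surjective (R := R) P n Y x
  let φ : ProjectiveResolution.Hom P' P g :=
    ⟨ProjectiveResolution.lift g P' P, by
      simpa using ProjectiveResolution.lift_commutes_zero g P' P⟩
  rw [extCocycles.mk₀_comp_toAbelianExt φ, abelianExtEquivExt_toAbelianExt,
    abelianExtEquivExt_toAbelianExt, extCocycles.map_app_toDerivedExt φ]

end ExtComparison

section DirectLimit

variable {A ι : Type*} [Ring A] [Preorder ι] [DecidableEq ι] [Nonempty ι] [IsDirectedOrder ι]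
  {G G' G'' : ι → Type*} [∀ i, AddCommGroup (G i)] [∀ i, Module A (G i)]
  [∀ i, AddCommGroup (G' i)] [∀ i, Module A (G' i)]
  [∀ i, AddCommGroup (G'' i)] [∀ i, Module A (G'' i)]
  {f : ∀ i j, i ≤ j → G i →ₗ[A] G j} {f' : ∀ i j, i ≤ j → G' i →ₗ[A] G' j}
  {f'' : ∀ i j, i ≤ j → G'' i →ₗ[A] G'' j} [DirectedSystem G'' (f'' · · ·)]

lemma directLimit_map_exact {g : ∀ i, G i →ₗ[A] G' i} {g' : ∀ i, G' i →ₗ[A] G'' i}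
    (hg : ∀ i j h, g j ∘ₗ f i j h = f' i j h ∘ₗ g i)
    (hg' : ∀ i j h, g' j ∘ₗ f' i j h = f'' i j h ∘ₗ g' i)
    (exact : ∀ i, Function.Exact (g i) (g' i)) :
    Function.Exact (Module.DirectLimit.map g hg) (Module.DirectLimit.map g' hg') := by
  refine fun z ↦ ⟨fun hz ↦ ?_, ?_⟩
  · obtain ⟨i, x, rfl⟩ := Module.DirectLimit.exists_of z
    rw [Module.DirectLimit.map_apply_of] at hz
    obtain ⟨j, hij, hx⟩ := Module.DirectLimit.of.zero_exact hz
    obtain ⟨y, hy⟩ := (exact j (f' i j hij x)).1 (by rw [← hx]; exact congr($(hg' i j hij) x))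
    refine ⟨Module.DirectLimit.of A ι G f j y, ?_⟩
    rw [Module.DirectLimit.map_apply_of, hy, Module.DirectLimit.of_f]
  · rintro ⟨w, rfl⟩
    obtain ⟨i, x, rfl⟩ := Module.DirectLimit.exists_of w
    rw [Module.DirectLimit.map_apply_of, Module.DirectLimit.map_apply_of,
      (exact i).apply_apply_eq_zero, map_zero]

end DirectLimit

section ExtColimit

variable {A : Type u} [CommRing A] (I : Ideal A)

/-- The module `A ⧸ I ^ n`, as it occurs in the diagram defining `localCohomology I`. -/
abbrev powerQuotient (n : ℕ) : ModuleCat.{u} A :=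
  (localCohomology.ringModIdeals (localCohomology.idealPowersDiagram I)).obj (op n)

/-- The projection `A ⧸ I ^ m ⟶ A ⧸ I ^ n` for `n ≤ m`. -/
abbrev powerQuotientMap {n m : ℕ} (h : n ≤ m) : powerQuotient I m ⟶ powerQuotient I n :=
  (localCohomology.ringModIdeals (localCohomology.idealPowersDiagram I)).map (homOfLE h).op

/-- The transition maps of the direct system of the modules `Ext^s(A ⧸ I ^ n, M)`. -/
abbrev powerExtTransition (s : ℕ) (M : ModuleCat.{u} A) (n m : ℕ) (h : n ≤ m) :
    Abelian.Ext (powerQuotient I n) M s →ₗ[A] Abelian.Ext (powerQuotient I m) M s :=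
  (Abelian.Ext.mk₀ (powerQuotientMap I h)).precompOfLinear A M (zero_add s)

instance (s : ℕ) (M : ModuleCat.{u} A) :
    DirectedSystem (fun n ↦ Abelian.Ext (powerQuotient I n) M s)
      (powerExtTransition I s M · · ·) where
  map_self n x := by
    have map_refl : powerQuotientMap I (le_refl n) = 𝟙 _ :=
      CategoryTheory.Functor.map_id _ _
    simp [map_refl]
  map_map k j i hij hjk x := by
    have map_trans :
        powerQuotientMap I (hij.trans hjk) = powerQuotientMap I hjk ≫ powerQuotientMap I hij :=
      Functor.map_comp _ (homOfLE hjk).op (homOfLE hij).op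
    simp only [Abelian.Ext.bilinearCompOfLinear_apply_apply, map_trans]
    rw [← Abelian.Ext.mk₀_comp_mk₀, Abelian.Ext.comp_assoc_of_second_deg_zero]

/-- The model `colim_n Ext^s(A ⧸ I ^ n, M)` of the local cohomology module `H^s_I(M)`, in terms of
`Abelian.Ext`, for which Mathlib has long exact sequences. -/
def ExtColimit (s : ℕ) (M : ModuleCat.{u} A) : Type u :=
  Module.DirectLimit (fun n ↦ Abelian.Ext (powerQuotient I n) M s) (powerExtTransition I s M)
deriving AddCommGroup, Module A

namespace ExtColimit

/-- The class in `ExtColimit I s M` of an element of `Ext^s(A ⧸ I ^ n, M)`. -/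
def of (s : ℕ) (M : ModuleCat.{u} A) (n : ℕ) :
    Abelian.Ext (powerQuotient I n) M s →ₗ[A] ExtColimit I s M :=
  Module.DirectLimit.of A ℕ (fun n ↦ Abelian.Ext (powerQuotient I n) M s)
    (powerExtTransition I s M) n

variable {I} in
lemma of_powerExtTransition {s : ℕ} {M : ModuleCat.{u} A} {n m : ℕ} (h : n ≤ m)
    (x : Abelian.Ext (powerQuotient I n) M s) :
    of I s M m (powerExtTransition I s M n m h x) = of I s M n x :=
  Module.DirectLimit.of_f

variable {I} in
lemma exists_of {s : ℕ} {M : ModuleCat.{u} A} (z : ExtColimit I s M) :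
    ∃ (n : ℕ) (x : Abelian.Ext (powerQuotient I n) M s), of I s M n x = z :=
  Module.DirectLimit.exists_of z

section Comparison

variable (s : ℕ) (M : ModuleCat.{u} A)

/-- The comparison of `Ext^s(A ⧸ I ^ n, M)` with the corresponding term of the diagram defining
local cohomology. -/
def termEquiv (n : ℕ) : Abelian.Ext (powerQuotient I n) M s ≃ₗ[A]
    ((Ext A (ModuleCat.{u} A) s).obj (op (powerQuotient I n))).obj M :=
  abelianExtEquivExt (projectiveResolution (powerQuotient I n)) s M

lemma map_app_termEquiv {n m : ℕ} (h : n ≤ m) (x : Abelian.Ext (powerQuotient I n) M s) :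
    ((Ext A (ModuleCat.{u} A) s).map (powerQuotientMap I h).op).app M (termEquiv I s M n x) =
      termEquiv I s M m (powerExtTransition I s M n m h x) :=
  map_app_abelianExtEquivExt _ x

/-- The cocone of the diagram defining `(localCohomology I s).obj M` with tip the model. -/
def cocone : Cocone (localCohomology.diagram (localCohomology.idealPowersDiagram I) s ⋙
    (evaluation _ _).obj M) where
  pt := ModuleCat.of A (ExtColimit I s M)
  ι :=
    { app n := ModuleCat.ofHom
        (of I s M n.unop.unop ∘ₗ (termEquiv I s M n.unop.unop).symm.toLinearMap)
      naturality n m h := by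
        ext x
        obtain ⟨x, rfl⟩ := (termEquiv I s M n.unop.unop).surjective x
        refine (congrArg (fun y ↦ of I s M _ ((termEquiv I s M _).symm y))
          (map_app_termEquiv I s M (leOfHom h.unop.unop) x)).trans ?_
        change of I s M _ ((termEquiv I s M _).symm (termEquiv I s M _ _)) =
          of I s M _ ((termEquiv I s M _).symm (termEquiv I s M _ x))
        rw [LinearEquiv.symm_apply_apply, LinearEquiv.symm_apply_apply, of_powerExtTransition] }

variable {I s M} in
/-- The map out of the model induced by a cocone of the diagram defining local cohomology. -/
def desc (c : Cocone (localCohomology.diagram (localCohomology.idealPowersDiagram I) s ⋙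
    (evaluation _ _).obj M)) : ExtColimit I s M →ₗ[A] c.pt :=
  Module.DirectLimit.lift A ℕ _ _
    (fun n ↦ (c.ι.app (op (op n))).hom ∘ₗ (termEquiv I s M n).toLinearMap) fun n m h x ↦ by
      refine (congrArg (c.ι.app (op (op m))) (map_app_termEquiv I s M h x).symm).trans ?_
      exact congr($(c.w (homOfLE h).op.op) (termEquiv I s M n x))

variable {I s M} in
lemma desc_of (c : Cocone (localCohomology.diagram (localCohomology.idealPowersDiagram I) s ⋙
    (evaluation _ _).obj M)) (n : ℕ) (x : Abelian.Ext (powerQuotient I n) M s) :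
    desc c (of I s M n x) = c.ι.app (op (op n)) (termEquiv I s M n x) :=
  Module.DirectLimit.lift_of _ _ _

/-- The model is a colimit of the diagram defining local cohomology. -/
def isColimitCocone : IsColimit (cocone I s M) where
  desc c := ModuleCat.ofHom (desc c)
  fac c n := by
    ext x
    refine (desc_of c n.unop.unop _).trans ?_
    exact congrArg (c.ι.app n) (LinearEquiv.apply_symm_apply _ x)
  uniq c d hd := by
    ext z
    obtain ⟨n, x, rfl⟩ := exists_of z
    refine Eq.trans ?_ (desc_of c n x).symm
    refine Eq.trans ?_ congr($(hd (op (op n))) (termEquiv I s M n x))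
    exact congrArg (fun y ↦ d (of I s M n y)) (LinearEquiv.symm_apply_apply _ x).symm

/-- The model agrees with Mathlib's local cohomology. -/
def equivLocalCohomology : ExtColimit I s M ≃ₗ[A] (localCohomology I s).obj M :=
  ((isColimitCocone I s M).coconePointUniqueUpToIso
    (isColimitOfPreserves ((evaluation _ _).obj M) (colimit.isColimit _))).toLinearEquiv

end Comparison

section LongExactSequence

variable {s : ℕ} {M M' : ModuleCat.{u} A}

/-- Composition with a class in `Ext^a(M, M')`, as a map on the colimits. -/
def postcomp {a s' : ℕ} (e : Abelian.Ext M M' a) (h : s + a = s') :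
    ExtColimit I s M →ₗ[A] ExtColimit I s' M' :=
  Module.DirectLimit.map (fun n ↦ e.postcompOfLinear A (powerQuotient I n) h) fun n m hnm ↦ by
    ext x
    exact Abelian.Ext.comp_assoc _ _ _ (zero_add s) h (by lia)

lemma postcomp_of {a s' : ℕ} (e : Abelian.Ext M M' a) (h : s + a = s') (n : ℕ)
    (x : Abelian.Ext (powerQuotient I n) M s) :
    postcomp I e h (of I s M n x) = of I s' M' n (x.comp e h) :=
  Module.DirectLimit.map_apply_of _ _ _

variable (s) in
/-- Functoriality of the model of local cohomology in the module. -/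
abbrev map (g : M ⟶ M') : ExtColimit I s M →ₗ[A] ExtColimit I s M' :=
  postcomp I (Abelian.Ext.mk₀ g) (add_zero s)

variable {M'' : ModuleCat.{u} A} {f : M ⟶ M'} {g : M' ⟶ M''} {w : f ≫ g = 0}
  (hS : (ShortComplex.mk f g w).ShortExact)

variable (s) in
/-- The connecting homomorphism of a short exact sequence. -/
abbrev δ : ExtColimit I s M'' →ₗ[A] ExtColimit I (s + 1) M :=
  postcomp I hS.extClass rfl

variable (s) in
lemma exact_map_δ : Function.Exact (map I s g) (δ I s hS) :=
  directLimit_map_exact _ _ fun n ↦ (ShortComplex.ab_exact_iff_function_exact _).1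
    (Abelian.Ext.covariant_sequence_exact₃' (powerQuotient I n) hS s (s + 1) rfl)

variable (s) in
lemma exact_δ_map : Function.Exact (δ I s hS) (map I (s + 1) f) :=
  directLimit_map_exact _ _ fun n ↦ (ShortComplex.ab_exact_iff_function_exact _).1
    (Abelian.Ext.covariant_sequence_exact₁' (powerQuotient I n) hS s (s + 1) rfl)

lemma δ_surjective [Subsingleton (ExtColimit I (s + 1) M')] :
    Function.Surjective (δ I s hS) :=
  fun x ↦ (exact_δ_map I s hS x).1 (Subsingleton.elim _ _)

lemma δ_injective [Subsingleton (ExtColimit I s M')] : Function.Injective (δ I s hS) := by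
  refine (injective_iff_map_eq_zero _).2 fun x hx ↦ ?_
  obtain ⟨y, rfl⟩ := (exact_map_δ I s hS x).1 hx
  rw [Subsingleton.elim y 0, map_zero]

end LongExactSequence

section Vanishing

lemma subsingleton_of_forall_ext {s : ℕ} {M : ModuleCat.{u} A}
    (h : ∀ n (x : Abelian.Ext (powerQuotient I n) M s), x = 0) :
    Subsingleton (ExtColimit I s M) := by
  refine subsingleton_of_forall_eq 0 fun z ↦ ?_
  obtain ⟨n, x, rfl⟩ := exists_of z
  rw [h n x, map_zero]

instance subsingleton_succ_of_injective (s : ℕ) (M : ModuleCat.{u} A) [Injective M] :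
    Subsingleton (ExtColimit I (s + 1) M) :=
  subsingleton_of_forall_ext I fun _ x ↦ x.eq_zero_of_injective

variable {I} in
lemma pow_smul_ext_eq_zero {t : A} (ht : t ∈ I) {s n : ℕ} {M : ModuleCat.{u} A}
    (x : Abelian.Ext (powerQuotient I n) M s) : t ^ n • x = 0 := by
  have pow_smul_id : t ^ n • 𝟙 (powerQuotient I n) = 0 := by
    ext y
    obtain ⟨a, rfl⟩ := Submodule.Quotient.mk_surjective (I ^ n) y
    exact (Submodule.Quotient.mk_eq_zero (I ^ n)).2
      (Ideal.mul_mem_right a _ (Ideal.pow_mem_pow ht n))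
  rw [← Abelian.Ext.mk₀_id_comp x, ← Abelian.Ext.smul_comp, ← Abelian.Ext.mk₀_smul, pow_smul_id,
    Abelian.Ext.mk₀_zero, Abelian.Ext.zero_comp]

lemma smul_ext_injective {X M : ModuleCat.{u} A} {s : ℕ} {t : A}
    (ht : Function.Bijective fun m : M ↦ t • m) :
    Function.Injective fun x : Abelian.Ext X M s ↦ t • x := by
  obtain ⟨v, hv⟩ :=
    ((Module.End.isUnit_iff (algebraMap A (Module.End A M) t)).2 ht).exists_right_inv
  have smul_id_comp_inv : (t • 𝟙 M) ≫ ModuleCat.ofHom v = 𝟙 M := by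
    rw [Linear.smul_comp, Category.id_comp]
    ext m
    exact congr($hv m)
  refine Function.LeftInverse.injective
    (g := fun y ↦ y.comp (Abelian.Ext.mk₀ (ModuleCat.ofHom v)) (add_zero s)) fun x ↦ ?_
  change (t • x).comp _ _ = x
  rw [Abelian.Ext.smul_eq_comp_mk₀, Abelian.Ext.comp_assoc_of_third_deg_zero,
    Abelian.Ext.mk₀_comp_mk₀, smul_id_comp_inv, Abelian.Ext.comp_mk₀_id]

variable {I} in
lemma subsingleton_of_smul_bijective {t : A} (htI : t ∈ I) (s : ℕ) {M : ModuleCat.{u} A}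
    (ht : Function.Bijective fun m : M ↦ t • m) : Subsingleton (ExtColimit I s M) := by
  refine subsingleton_of_forall_ext I fun n x ↦ ?_
  have pow_smul_injective : Function.Injective fun x : Abelian.Ext (powerQuotient I n) M s ↦
      t ^ n • x := by
    simpa only [smul_iterate] using (smul_ext_injective ht).iterate n
  exact pow_smul_injective ((pow_smul_ext_eq_zero htI x).trans (smul_zero _).symm)

end Vanishing

section DegreeZero

variable (M : ModuleCat.{u} A)

/-- The class of `1` in `A ⧸ I ^ n`. -/
def powerQuotientOne (n : ℕ) : powerQuotient I n := (Submodule.Quotient.mk 1 : A ⧸ I ^ n)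

lemma exists_of_mk₀ {M : ModuleCat.{u} A} (z : ExtColimit I 0 M) :
    ∃ (n : ℕ) (f : powerQuotient I n ⟶ M), of I 0 M n (Abelian.Ext.mk₀ f) = z := by
  obtain ⟨n, x, rfl⟩ := exists_of z
  obtain ⟨f, rfl⟩ := (Abelian.Ext.mk₀_bijective _ _).2 x
  exact ⟨n, f, rfl⟩

/-- The evaluation `Hom(A ⧸ I ^ n, M) → M` at `1`. -/
def termEvalOne (n : ℕ) : Abelian.Ext (powerQuotient I n) M 0 →ₗ[A] M :=
  LinearMap.applyₗ (powerQuotientOne I n) ∘ₗ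
    (Abelian.Ext.linearEquiv₀.trans (ModuleCat.homLinearEquiv (S := A))).toLinearMap

lemma termEvalOne_mk₀ {M : ModuleCat.{u} A} {n : ℕ} (f : powerQuotient I n ⟶ M) :
    termEvalOne I M n (Abelian.Ext.mk₀ f) = f (powerQuotientOne I n) :=
  congr(($(Abelian.Ext.linearEquiv₀.apply_symm_apply (R := A) f)) (powerQuotientOne I n))

/-- The evaluations `Hom(A ⧸ I ^ n, M) → M` at `1`, passed to the colimit. -/
def evalOne : ExtColimit I 0 M →ₗ[A] M :=
  Module.DirectLimit.lift A ℕ _ _ (termEvalOne I M) fun n m h x ↦ by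
    obtain ⟨f, rfl⟩ := (Abelian.Ext.mk₀_bijective _ _).2 x
    rw [Abelian.Ext.bilinearCompOfLinear_apply_apply, Abelian.Ext.mk₀_comp_mk₀, termEvalOne_mk₀,
      termEvalOne_mk₀]
    rfl

variable {I M} in
lemma evalOne_of_mk₀ {n : ℕ} (f : powerQuotient I n ⟶ M) :
    evalOne I M (of I 0 M n (Abelian.Ext.mk₀ f)) = f (powerQuotientOne I n) :=
  (Module.DirectLimit.lift_of _ _ _).trans (termEvalOne_mk₀ I f)

lemma evalOne_map {M M' : ModuleCat.{u} A} (g : M ⟶ M') (z : ExtColimit I 0 M) :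
    evalOne I M' (map I 0 g z) = g (evalOne I M z) := by
  obtain ⟨n, f, rfl⟩ := exists_of_mk₀ I z
  rw [postcomp_of, Abelian.Ext.mk₀_comp_mk₀, evalOne_of_mk₀, evalOne_of_mk₀]
  rfl

lemma evalOne_injective : Function.Injective (evalOne I M) := by
  refine (injective_iff_map_eq_zero _).2 fun z hz ↦ ?_
  obtain ⟨n, f, rfl⟩ := exists_of_mk₀ I z
  rw [evalOne_of_mk₀] at hz
  have f_eq_zero : f = 0 := by
    ext : 1
    exact Submodule.linearMap_qext _ (LinearMap.ext_ring hz)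
  rw [f_eq_zero, Abelian.Ext.mk₀_zero, map_zero]

lemma range_evalOne : LinearMap.range (evalOne I M) = Ideal.primaryComponent M I := by
  ext x
  rw [Ideal.primaryComponent_mem]
  constructor
  · rintro ⟨z, rfl⟩
    obtain ⟨n, f, rfl⟩ := exists_of_mk₀ I z
    refine ⟨n, (Submodule.mem_torsionBySet_iff _ _).2 fun a ↦ ?_⟩
    have smul_one : (a : A) • powerQuotientOne I n = 0 :=
      (Submodule.Quotient.mk_eq_zero (I ^ n)).2 (Ideal.mul_mem_right 1 _ a.2)
    rw [evalOne_of_mk₀]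
    exact (map_smul f.hom _ _).symm.trans ((congrArg f smul_one).trans (map_zero f.hom))
  · rintro ⟨n, hn⟩
    let f : powerQuotient I n ⟶ M :=
      ModuleCat.ofHom (Submodule.liftQ (I ^ n) (LinearMap.toSpanSingleton A M x)
        fun a ha ↦ (Submodule.mem_torsionBySet_iff _ _).1 hn ⟨a, ha⟩)
    exact ⟨of I 0 M n (Abelian.Ext.mk₀ f), (evalOne_of_mk₀ f).trans (one_smul A x)⟩

/-- The identification of `H⁰_I(M)` with the `I`-power torsion of `M`. -/
def zeroEquiv : ExtColimit I 0 M ≃ₗ[A] Ideal.primaryComponent M I :=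
  LinearEquiv.ofInjective (evalOne I M) (evalOne_injective I M) ≪≫ₗ
    LinearEquiv.ofEq _ _ (range_evalOne I M)

lemma zeroEquiv_map {M M' : ModuleCat.{u} A} (g : M ⟶ M') (z : ExtColimit I 0 M) :
    zeroEquiv I M' (map I 0 g z) = Ideal.primaryComponent.map I g.hom (zeroEquiv I M z) :=
  Subtype.ext (evalOne_map I g z)

variable {I M} in
lemma subsingleton_zero_of_smul_injective {t : A} (htI : t ∈ I)
    (ht : Function.Injective fun m : M ↦ t • m) : Subsingleton (ExtColimit I 0 M) := by
  refine (zeroEquiv I M).toEquiv.subsingleton_congr.2 (subsingleton_of_forall_eq 0 ?_)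
  rintro ⟨x, hx⟩
  obtain ⟨n, hn⟩ := (Ideal.primaryComponent_mem M I x).1 hx
  have pow_smul_injective : Function.Injective fun m : M ↦ t ^ n • m := by
    simpa only [smul_iterate] using ht.iterate n
  have pow_smul_eq_zero := (Submodule.mem_torsionBySet_iff _ _).1 hn ⟨_, Ideal.pow_mem_pow htI n⟩
  exact Subtype.ext (pow_smul_injective (pow_smul_eq_zero.trans (smul_zero _).symm))

end DegreeZero

end ExtColimit

end ExtColimit

open Polynomial
open Module (AEval AEval')

section AEvalMap

variable {R M M' M'' : Type*} [CommRing R] [AddCommGroup M] [Module R M]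
  [AddCommGroup M'] [Module R M'] [AddCommGroup M''] [Module R M'']
  {φ'' : Module.End R M''} {φ' : Module.End R M'} {φ : Module.End R M}

/-- A linear map intertwining two endomorphisms, as a map of modules over the polynomial ring. -/
def aevalMap (f : M →ₗ[R] M') (hf : f ∘ₗ φ = φ' ∘ₗ f) : AEval' φ →ₗ[R[X]] AEval' φ' :=
  LinearMap.ofAEval φ ((AEval'.of φ').toLinearMap ∘ₗ f) fun m ↦ by
    rw [LinearMap.comp_apply, LinearMap.comp_apply]
    exact (congrArg (AEval'.of φ') congr($hf m)).trans (AEval.X_smul_of φ' (f m)).symm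

variable {f : M →ₗ[R] M'} {g : M' →ₗ[R] M''} {hf : f ∘ₗ φ = φ' ∘ₗ f} {hg : g ∘ₗ φ' = φ'' ∘ₗ g}

lemma aevalMap_injective (h : Function.Injective f) : Function.Injective (aevalMap f hf) := h

lemma aevalMap_surjective (h : Function.Surjective f) : Function.Surjective (aevalMap f hf) := h

lemma aevalMap_exact (h : Function.Exact f g) :
    Function.Exact (aevalMap f hf) (aevalMap g hg) := h

end AEvalMap

lemma finsupp_mapRange_exact {R M M' M'' : Type*} (ι : Type*) [CommRing R] [AddCommGroup M]
    [Module R M] [AddCommGroup M'] [Module R M'] [AddCommGroup M''] [Module R M'']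
    {f : M →ₗ[R] M'} {g : M' →ₗ[R] M''} (h : Function.Exact f g) :
    Function.Exact (Finsupp.mapRange.linearMap (α := ι) f) (Finsupp.mapRange.linearMap g) := by
  intro v
  have mem_range_iff : v ∈ Set.range (Finsupp.mapRange.linearMap (α := ι) f) ↔
      ∀ i, v i ∈ Set.range f :=
    Set.ext_iff.1 (Finsupp.range_mapRange f (map_zero f)) v
  rw [mem_range_iff, Finsupp.ext_iff]
  exact forall_congr' fun i ↦ h (v i)

section InversePolynomial

variable (R : Type*) [CommRing R] (M : Type*) [AddCommGroup M] [Module R M]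

/-- The module `M[X⁻¹]` of inverse polynomials, on which `X` acts by shifting the coefficients and
discarding the leading one. The coefficient with index `k` belongs to `X⁻ᵏ⁻¹`. -/
abbrev InversePolynomial : Type _ :=
  AEval' (Finsupp.lcomapDomain (R := R) (M := M) Nat.succ Nat.succ_injective)

namespace InversePolynomial

variable {M' M'' : Type*} [AddCommGroup M'] [Module R M'] [AddCommGroup M''] [Module R M'']

variable {R M}

/-- The coefficients of an inverse polynomial. -/
abbrev coeffs : InversePolynomial R M ≃ₗ[R] (ℕ →₀ M) :=
  (AEval'.of _).symm

lemma coeffs_C_smul (r : R) (f : InversePolynomial R M) (k : ℕ) :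
    coeffs ((C r : R[X]) • f) k = r • coeffs f k := by
  rw [AEval.C_smul, map_smul, Finsupp.smul_apply]

lemma coeffs_X_smul (f : InversePolynomial R M) (k : ℕ) :
    coeffs ((X : R[X]) • f) k = coeffs f (k + 1) :=
  congr($(AEval.of_symm_X_smul _ f) k)

lemma coeffs_X_pow_smul (n : ℕ) (f : InversePolynomial R M) (k : ℕ) :
    coeffs ((X ^ n : R[X]) • f) k = coeffs f (k + n) := by
  induction n generalizing k with
  | zero => rw [pow_zero, one_smul, add_zero]
  | succ n ih => rw [pow_succ', mul_smul, coeffs_X_smul, ih, Nat.add_right_comm, add_assoc]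

/-- Functoriality of inverse polynomials in the coefficient module. -/
def map (g : M →ₗ[R] M') : InversePolynomial R M →ₗ[R[X]] InversePolynomial R M' :=
  aevalMap (Finsupp.mapRange.linearMap g) (LinearMap.ext fun _ ↦ Finsupp.ext fun _ ↦ rfl)

lemma coeffs_map (g : M →ₗ[R] M') (f : InversePolynomial R M) (k : ℕ) :
    coeffs (map g f) k = g (coeffs f k) :=
  rfl

lemma map_injective {g : M →ₗ[R] M'} (hg : Function.Injective g) : Function.Injective (map g) :=
  aevalMap_injective (Finsupp.mapRange_injective g (map_zero g) hg)

lemma map_surjective {g : M →ₗ[R] M'} (hg : Function.Surjective g) :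
    Function.Surjective (map g) :=
  aevalMap_surjective (Finsupp.mapRange_surjective g (map_zero g) hg)

lemma map_exact {g : M →ₗ[R] M'} {g' : M' →ₗ[R] M''} (h : Function.Exact g g') :
    Function.Exact (map g) (map g') :=
  aevalMap_exact (finsupp_mapRange_exact ℕ h)

lemma mem_range_map {g : M →ₗ[R] M'} {f : InversePolynomial R M'} :
    f ∈ LinearMap.range (map g) ↔ ∀ k, coeffs f k ∈ LinearMap.range g :=
  Set.ext_iff.1 (Finsupp.range_mapRange g (map_zero g)) (coeffs f)

/-- Isomorphic coefficient modules have isomorphic modules of inverse polynomials. -/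
def congr (e : M ≃ₗ[R] M') : InversePolynomial R M ≃ₗ[R[X]] InversePolynomial R M' :=
  LinearEquiv.ofBijective (map e.toLinearMap)
    ⟨map_injective e.injective, map_surjective e.surjective⟩

lemma coeffs_congr (e : M ≃ₗ[R] M') (f : InversePolynomial R M) (k : ℕ) :
    coeffs (congr e f) k = e (coeffs f k) :=
  rfl

end InversePolynomial

end InversePolynomial

section Torsion

variable {R : Type*} [CommRing R] (J : Ideal R)

/-- The ideal `J R[X] + (X)` of the polynomial ring. -/
abbrev adjoinX : Ideal R[X] := Ideal.map C J ⊔ Ideal.span {X}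

lemma X_mem_adjoinX : X ∈ adjoinX J :=
  Ideal.mem_sup_right (Ideal.mem_span_singleton_self X)

namespace InversePolynomial

variable {M M' : Type*} [AddCommGroup M] [Module R M] [AddCommGroup M'] [Module R M']

lemma coeffs_mem_primaryComponent {f : InversePolynomial R M}
    (hf : f ∈ Ideal.primaryComponent (InversePolynomial R M) (adjoinX J)) (k : ℕ) :
    coeffs f k ∈ Ideal.primaryComponent M J := by
  rw [Ideal.primaryComponent_mem] at hf ⊢
  obtain ⟨n, hn⟩ := hf
  refine ⟨n, (Submodule.mem_torsionBySet_iff _ _).2 fun ⟨a, ha⟩ ↦ ?_⟩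
  have C_mem_pow : C a ∈ adjoinX J ^ n := by
    refine Ideal.pow_right_mono le_sup_left n ?_
    rw [← Ideal.map_pow]
    exact Ideal.mem_map_of_mem C ha
  have C_smul_eq_zero := (Submodule.mem_torsionBySet_iff _ _).1 hn ⟨C a, C_mem_pow⟩
  rw [← coeffs_C_smul]
  exact congr(coeffs $C_smul_eq_zero k)

lemma mem_primaryComponent_of_coeffs {f : InversePolynomial R M}
    (hf : ∀ k, coeffs f k ∈ Ideal.primaryComponent M J) :
    f ∈ Ideal.primaryComponent (InversePolynomial R M) (adjoinX J) := by
  simp only [Ideal.primaryComponent_mem, Submodule.mem_torsionBySet_iff] at hf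
  choose exponent pow_smul_coeffs using hf
  obtain ⟨m, hm⟩ : ∃ m, ∀ k, m ≤ k → coeffs f k = 0 := by
    obtain ⟨m, hm⟩ := (coeffs f).support.bddAbove
    exact ⟨m + 1, fun k hk ↦ Finsupp.notMem_support_iff.1 fun h ↦ by
      have := hm h
      lia⟩
  let n := (Finset.range m).sup exponent
  have pow_le_ker : adjoinX J ^ (n + m) ≤ LinearMap.ker (LinearMap.toSpanSingleton R[X] _ f) := by
    refine Ideal.sup_pow_add_le_pow_sup_pow.trans (sup_le ?_ ?_)
    · rw [← Ideal.map_pow, Ideal.map_le_iff_le_comap]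
      refine fun a ha ↦ coeffs.injective (Finsupp.ext fun k ↦ (coeffs_C_smul a f k).trans ?_)
      rcases lt_or_ge k m with hk | hk
      · exact pow_smul_coeffs k
          ⟨a, Ideal.pow_le_pow_right (Finset.le_sup (Finset.mem_range.2 hk)) ha⟩
      · rw [hm k hk, smul_zero, map_zero, Finsupp.zero_apply]
    · rw [Ideal.span_singleton_pow, Ideal.span_singleton_le_iff_mem]
      refine coeffs.injective (Finsupp.ext fun k ↦ (coeffs_X_pow_smul m f k).trans ?_)
      rw [hm _ (Nat.le_add_left m k), map_zero, Finsupp.zero_apply]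
  exact (Ideal.primaryComponent_mem _ _ _).2
    ⟨n + m, (Submodule.mem_torsionBySet_iff _ _).2 fun a ↦ pow_le_ker a.2⟩

variable (M) in
lemma range_map_subtype_primaryComponent :
    LinearMap.range (map (Ideal.primaryComponent M J).subtype) =
      Ideal.primaryComponent (InversePolynomial R M) (adjoinX J) := by
  ext f
  rw [mem_range_map, Submodule.range_subtype]
  exact ⟨mem_primaryComponent_of_coeffs J, coeffs_mem_primaryComponent J⟩

variable (M) in
/-- The power torsion of `M[X⁻¹]` consists of the inverse polynomials with power torsion
coefficients. -/
def primaryComponentEquiv : InversePolynomial R (Ideal.primaryComponent M J) ≃ₗ[R[X]]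
    Ideal.primaryComponent (InversePolynomial R M) (adjoinX J) :=
  LinearEquiv.ofInjective (map (Ideal.primaryComponent M J).subtype)
      (map_injective Subtype.val_injective) ≪≫ₗ
    LinearEquiv.ofEq _ _ (range_map_subtype_primaryComponent J M)

lemma primaryComponentEquiv_map (g : M →ₗ[R] M')
    (f : InversePolynomial R (Ideal.primaryComponent M J)) :
    primaryComponentEquiv J M' (map (Ideal.primaryComponent.map J g) f) =
      Ideal.primaryComponent.map (adjoinX J) (map g) (primaryComponentEquiv J M f) :=
  Subtype.ext (coeffs.injective (Finsupp.ext fun _ ↦ rfl))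

end InversePolynomial

end Torsion

/-- An `R`-linear map of `R[X]`-modules which commutes with `X`, as an `R[X]`-linear map. -/
def linearMapOfXSMul {R Z W : Type*} [CommRing R] [AddCommGroup Z] [Module R Z] [Module R[X] Z]
    [IsScalarTower R R[X] Z] [AddCommGroup W] [Module R W] [Module R[X] W] [IsScalarTower R R[X] W]
    (f : Z →ₗ[R] W) (hf : ∀ z, f ((X : R[X]) • z) = (X : R[X]) • f z) : Z →ₗ[R[X]] W :=
  LinearMap.ofAEval (X : R[X]) f hf ∘ₗ
    (LinearEquiv.ofAEval (X : R[X]) (LinearEquiv.refl R Z) fun _ ↦ rfl).symm.toLinearMap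

section InversePowerSeries

variable (R : Type u) [CommRing R] (E : Type u) [AddCommGroup E] [Module R E]

/-- The module `E⟦X⁻¹⟧` of inverse power series, on which `X` acts by shifting the coefficients and
discarding the leading one. The coefficient with index `k` belongs to `X⁻ᵏ⁻¹`. -/
abbrev InversePowerSeries : Type u := AEval' (LinearMap.funLeft R E Nat.succ)

namespace InversePowerSeries

variable {R E}

/-- The coefficients of an inverse power series. -/
abbrev coeffs : InversePowerSeries R E ≃ₗ[R] (ℕ → E) := (AEval'.of _).symm

lemma coeffs_X_smul (f : InversePowerSeries R E) (k : ℕ) :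
    coeffs ((X : R[X]) • f) k = coeffs f (k + 1) :=
  congr($(AEval.of_symm_X_smul _ f) k)

lemma coeffs_X_pow_smul_zero (n : ℕ) (f : InversePowerSeries R E) :
    coeffs ((X ^ n : R[X]) • f) 0 = coeffs f n := by
  induction n generalizing f with
  | zero => rw [pow_zero, one_smul]
  | succ n ih => rw [pow_succ, mul_smul, ih, coeffs_X_smul]

/-- The map `z ↦ ∑ k, l (Xᵏ • z) X⁻ᵏ⁻¹`, by which `E⟦X⁻¹⟧` is coinduced from `E`. -/
def lift {Z : Type*} [AddCommGroup Z] [Module R Z] [Module R[X] Z] [IsScalarTower R R[X] Z]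
    (l : Z →ₗ[R] E) : Z →ₗ[R[X]] InversePowerSeries R E :=
  linearMapOfXSMul
    ((AEval'.of _).toLinearMap ∘ₗ LinearMap.pi fun k ↦ l ∘ₗ Algebra.lsmul R R Z (X ^ k : R[X]))
    fun z ↦ coeffs.injective (funext fun k ↦ by
      rw [coeffs_X_smul]
      change l ((X ^ k : R[X]) • (X : R[X]) • z) = l ((X ^ (k + 1) : R[X]) • z)
      rw [pow_succ, mul_smul])

lemma coeffs_lift {Z : Type*} [AddCommGroup Z] [Module R Z] [Module R[X] Z]
    [IsScalarTower R R[X] Z] (l : Z →ₗ[R] E) (z : Z) (k : ℕ) :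
    coeffs (lift l z) k = l ((X ^ k : R[X]) • z) :=
  rfl

instance injective [Module.Injective R E] : Module.Injective R[X] (InversePowerSeries R E) where
  out Y Z _ _ _ _ i hi f := by
    let _ : Module R Y := Module.compHom Y C
    let _ : Module R Z := Module.compHom Z C
    have : IsScalarTower R R[X] Y := .of_algebraMap_smul fun _ _ ↦ rfl
    have : IsScalarTower R R[X] Z := .of_algebraMap_smul fun _ _ ↦ rfl
    let leadingCoeff : Y →ₗ[R] E :=
      LinearMap.proj 0 ∘ₗ coeffs.toLinearMap ∘ₗ f.restrictScalars R
    obtain ⟨l, hl⟩ := Module.Injective.out (i.restrictScalars R) hi leadingCoeff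
    refine ⟨lift l, fun y ↦ coeffs.injective (funext fun k ↦ ?_)⟩
    calc coeffs (lift l (i y)) k
      _ = l (i ((X ^ k : R[X]) • y)) := by rw [coeffs_lift, map_smul i]
      _ = coeffs (f ((X ^ k : R[X]) • y)) 0 := hl _
      _ = coeffs (f y) k := by rw [map_smul, coeffs_X_pow_smul_zero]

variable (R E)

/-- The inclusion `E[X⁻¹] → E⟦X⁻¹⟧`. -/
def ofInversePolynomial : InversePolynomial R E →ₗ[R[X]] InversePowerSeries R E :=
  aevalMap Finsupp.lcoeFun rfl

lemma ofInversePolynomial_injective : Function.Injective (ofInversePolynomial R E) :=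
  aevalMap_injective DFunLike.coe_injective

variable {R E}

lemma mem_range_ofInversePolynomial {f : InversePowerSeries R E} :
    f ∈ LinearMap.range (ofInversePolynomial R E) ↔ (Function.support (coeffs f)).Finite :=
  ⟨fun ⟨g, hg⟩ ↦ hg ▸ (InversePolynomial.coeffs g).hasFiniteSupport,
    fun hf ↦ ⟨AEval'.of _ (Finsupp.ofSupportFinite (coeffs f) hf), rfl⟩⟩

lemma X_smul_mem_range_iff {f : InversePowerSeries R E} :
    (X : R[X]) • f ∈ LinearMap.range (ofInversePolynomial R E) ↔
      f ∈ LinearMap.range (ofInversePolynomial R E) := by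
  refine ⟨fun h ↦ ?_, Submodule.smul_mem _ X⟩
  rw [mem_range_ofInversePolynomial] at h ⊢
  refine ((h.image Nat.succ).insert 0).subset fun k hk ↦ ?_
  cases k with
  | zero => exact Set.mem_insert 0 _
  | succ k => exact Set.mem_insert_of_mem 0 ⟨k, by rwa [Function.mem_support, coeffs_X_smul], rfl⟩

variable (R E) in
lemma X_smul_quotient_bijective :
    Function.Bijective fun q : InversePowerSeries R E ⧸
      LinearMap.range (ofInversePolynomial R E) ↦ (X : R[X]) • q := by
  constructor
  · refine (injective_iff_map_eq_zero (DistribSMul.toAddMonoidHom _ (X : R[X]))).2 fun q hq ↦ ?_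
    obtain ⟨f, rfl⟩ := Submodule.Quotient.mk_surjective _ q
    exact (Submodule.Quotient.mk_eq_zero _).2
      (X_smul_mem_range_iff.1 ((Submodule.Quotient.mk_eq_zero _).1 hq))
  · intro q
    obtain ⟨f, rfl⟩ := Submodule.Quotient.mk_surjective _ q
    -- `X` discards the coefficient with index `0`, so its value `coeffs f (0 - 1)` is irrelevant.
    refine ⟨Submodule.Quotient.mk (AEval'.of _ fun k ↦ coeffs f (k - 1)), ?_⟩
    refine congrArg Submodule.Quotient.mk (coeffs.injective (funext fun k ↦ ?_))
    rw [coeffs_X_smul]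
    rfl

end InversePowerSeries

end InversePowerSeries

section Induction

/-- An isomorphism of the first two terms of two right exact sequences induces an isomorphism of
the third terms. -/
def cokernelEquiv {A K L P K' L' P' : Type*} [CommRing A] [AddCommGroup K] [AddCommGroup L]
    [AddCommGroup P] [AddCommGroup K'] [AddCommGroup L'] [AddCommGroup P'] [Module A K] [Module A L]
    [Module A P] [Module A K'] [Module A L'] [Module A P'] {f : K →ₗ[A] L} {π : L →ₗ[A] P}
    {f' : K' →ₗ[A] L'} {π' : L' →ₗ[A] P'} (exact : Function.Exact f π)
    (hπ : Function.Surjective π) (exact' : Function.Exact f' π') (hπ' : Function.Surjective π')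
    (eK : K ≃ₗ[A] K') (eL : L ≃ₗ[A] L') (comm : ∀ x, eL (f x) = f' (eK x)) : P ≃ₗ[A] P' :=
  have map_ker : (LinearMap.ker π).map eL.toLinearMap = LinearMap.ker π' := by
    have comm' : eL.toLinearMap ∘ₗ f = f' ∘ₗ eK.toLinearMap := LinearMap.ext comm
    rw [exact.linearMap_ker_eq, exact'.linearMap_ker_eq, ← LinearMap.range_comp, comm',
      LinearMap.range_comp_of_range_eq_top f' eK.range]
  (π.quotKerEquivOfSurjective hπ).symm ≪≫ₗ Submodule.Quotient.equiv _ _ eL map_ker ≪≫ₗ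
    π'.quotKerEquivOfSurjective hπ'

lemma shortExact_of_exact {A : Type u} [CommRing A] {N E Q : Type u} [AddCommGroup N]
    [AddCommGroup E] [AddCommGroup Q] [Module A N] [Module A E] [Module A Q] {f : N →ₗ[A] E}
    {g : E →ₗ[A] Q} (hf : Function.Injective f) (hg : Function.Surjective g)
    (hfg : Function.Exact f g) :
    (ShortComplex.mk (ModuleCat.ofHom f) (ModuleCat.ofHom g)
      (ModuleCat.hom_ext hfg.linearMap_comp_eq_zero)).ShortExact :=
  ModuleCat.shortComplex_shortExact _ hfg hf hg

lemma exists_injective_linearMap_injective (R : Type u) [CommRing R] (N : Type u)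
    [AddCommGroup N] [Module R N] :
    ∃ (E : Type u) (_ : AddCommGroup E) (_ : Module R E) (_ : Module.Injective R E)
      (f : N →ₗ[R] E), Function.Injective f := by
  have : EnoughInjectives (ModuleCat.{u} R) := ModuleCat.enoughInjectives.{u, u} R
  let E : ModuleCat.{u} R := Injective.under (ModuleCat.of R N)
  have : Injective (ModuleCat.of R E) := Injective.injective_under (ModuleCat.of R N)
  exact ⟨E, inferInstance, inferInstance, Module.injective_module_of_injective_object R E,
    (Injective.ι (ModuleCat.of R N)).hom,
    (ModuleCat.mono_iff_injective (Injective.ι (ModuleCat.of R N))).1 inferInstance⟩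

variable {R : Type u} [CommRing R] (J : Ideal R)

namespace InversePolynomial

instance subsingleton_extColimit_succ (s : ℕ) (E : Type u) [AddCommGroup E] [Module R E]
    [Module.Injective R E] :
    Subsingleton (ExtColimit (adjoinX J) (s + 1) (ModuleCat.of R[X] (InversePolynomial R E))) := by
  have ses := shortExact_of_exact (InversePowerSeries.ofInversePolynomial_injective R E)
    (Submodule.mkQ_surjective _) (LinearMap.exact_map_mkQ_range _)
  have : Injective (ModuleCat.of R[X] (InversePowerSeries R E)) :=
    Module.injective_object_of_injective_module _ _
  have : Subsingleton (ExtColimit (adjoinX J) s (ModuleCat.of R[X] (InversePowerSeries R E ⧸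
      LinearMap.range (InversePowerSeries.ofInversePolynomial R E)))) :=
    ExtColimit.subsingleton_of_smul_bijective (X_mem_adjoinX J) s
      (InversePowerSeries.X_smul_quotient_bijective R E)
  have := ExtColimit.subsingleton_succ_of_injective (adjoinX J) s
    (ModuleCat.of R[X] (InversePowerSeries R E))
  exact (ExtColimit.δ_surjective (adjoinX J) ses).subsingleton

variable (M : Type u) [AddCommGroup M] [Module R M]

/-- Inverse polynomials commute with local cohomology in degree `0`. -/
def extColimitZeroEquiv :
    ExtColimit (adjoinX J) 0 (ModuleCat.of R[X] (InversePolynomial R M)) ≃ₗ[R[X]]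
      InversePolynomial R (ExtColimit J 0 (ModuleCat.of R M)) :=
  ExtColimit.zeroEquiv (adjoinX J) _ ≪≫ₗ (primaryComponentEquiv J M).symm ≪≫ₗ
    congr (ExtColimit.zeroEquiv J (ModuleCat.of R M)).symm

variable {M} {M' : Type u} [AddCommGroup M'] [Module R M']

lemma extColimitZeroEquiv_map (g : M →ₗ[R] M')
    (z : ExtColimit (adjoinX J) 0 (ModuleCat.of R[X] (InversePolynomial R M))) :
    extColimitZeroEquiv J M' (ExtColimit.map (adjoinX J) 0 (ModuleCat.ofHom (map g)) z) =
      map (ExtColimit.map J 0 (ModuleCat.ofHom g)) (extColimitZeroEquiv J M z) := by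
  obtain ⟨f, hf⟩ := (primaryComponentEquiv J M).surjective (ExtColimit.zeroEquiv (adjoinX J) _ z)
  have hf' : (primaryComponentEquiv J M').symm (ExtColimit.zeroEquiv (adjoinX J) _
      (ExtColimit.map (adjoinX J) 0 (ModuleCat.ofHom (map g)) z)) =
      map (Ideal.primaryComponent.map J g) f := by
    rw [LinearEquiv.symm_apply_eq, primaryComponentEquiv_map, hf, ExtColimit.zeroEquiv_map]
    rfl
  have congr_map (f : InversePolynomial R (Ideal.primaryComponent M J)) :
      congr (ExtColimit.zeroEquiv J (ModuleCat.of R M')).symm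
        (map (Ideal.primaryComponent.map J g) f) =
      map (ExtColimit.map J 0 (ModuleCat.ofHom g))
        (congr (ExtColimit.zeroEquiv J (ModuleCat.of R M)).symm f) := by
    refine coeffs.injective (Finsupp.ext fun k ↦ ?_)
    rw [coeffs_congr, coeffs_map, coeffs_map, coeffs_congr, LinearEquiv.symm_apply_eq,
      ExtColimit.zeroEquiv_map, LinearEquiv.apply_symm_apply]
    rfl
  simp only [extColimitZeroEquiv, LinearEquiv.trans_apply]
  rw [hf', ← hf, LinearEquiv.symm_apply_apply, congr_map]

variable {N E Q : Type u} [AddCommGroup N] [AddCommGroup E] [AddCommGroup Q]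
  [Module R N] [Module R E] [Module R Q] [Module.Injective R E] {f : N →ₗ[R] E} {g : E →ₗ[R] Q}

/-- Dimension shifting along `0 → N → E → Q → 0` with `E` injective: both sides are cokernels of
the maps induced by `E → Q` in degree `s`. -/
def extColimitSuccEquiv (hf : Function.Injective f) (hg : Function.Surjective g)
    (hfg : Function.Exact f g) {s : ℕ}
    (eE : ExtColimit (adjoinX J) s (ModuleCat.of R[X] (InversePolynomial R E)) ≃ₗ[R[X]]
      InversePolynomial R (ExtColimit J s (ModuleCat.of R E)))
    (eQ : ExtColimit (adjoinX J) s (ModuleCat.of R[X] (InversePolynomial R Q)) ≃ₗ[R[X]]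
      InversePolynomial R (ExtColimit J s (ModuleCat.of R Q)))
    (comm : ∀ z, eQ (ExtColimit.map (adjoinX J) s (ModuleCat.ofHom (map g)) z) =
      map (ExtColimit.map J s (ModuleCat.ofHom g)) (eE z)) :
    ExtColimit (adjoinX J) (s + 1) (ModuleCat.of R[X] (InversePolynomial R N)) ≃ₗ[R[X]]
      InversePolynomial R (ExtColimit J (s + 1) (ModuleCat.of R N)) :=
  have ses := shortExact_of_exact hf hg hfg
  have ses' := shortExact_of_exact (map_injective hf) (map_surjective hg) (map_exact hfg)
  have : Injective (ModuleCat.of R E) := Module.injective_object_of_injective_module R E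
  have : Subsingleton (ExtColimit J (s + 1) (ModuleCat.of R E)) :=
    ExtColimit.subsingleton_succ_of_injective J s (ModuleCat.of R E)
  cokernelEquiv (ExtColimit.exact_map_δ (adjoinX J) s ses')
    (ExtColimit.δ_surjective (adjoinX J) ses') (map_exact (ExtColimit.exact_map_δ J s ses))
    (map_surjective (ExtColimit.δ_surjective J ses)) eE eQ comm

theorem nonempty_extColimit_equiv (s : ℕ) (N : Type u) [AddCommGroup N] [Module R N] :
    Nonempty (ExtColimit (adjoinX J) s (ModuleCat.of R[X] (InversePolynomial R N)) ≃ₗ[R[X]]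
      InversePolynomial R (ExtColimit J s (ModuleCat.of R N))) := by
  induction s generalizing N with
  | zero => exact ⟨extColimitZeroEquiv J N⟩
  | succ s ih =>
    obtain ⟨E, _, _, _, f, f_injective⟩ := exists_injective_linearMap_injective R N
    have succEquiv := extColimitSuccEquiv J f_injective (Submodule.mkQ_surjective _)
      (LinearMap.exact_map_mkQ_range f) (s := s)
    cases s with
    | zero => exact ⟨succEquiv _ _ (extColimitZeroEquiv_map J _)⟩
    | succ s =>
      obtain ⟨eE⟩ := ih E
      obtain ⟨eQ⟩ := ih (E ⧸ LinearMap.range f)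
      exact ⟨succEquiv eE eQ fun z ↦ by rw [Subsingleton.elim z 0]; simp only [map_zero]⟩

end InversePolynomial

end Induction

open scoped TensorProduct

section Laurent

lemma finsupp_exact_lmapDomain_lcomapDomain {α β γ M R : Type*} [Ring R] [AddCommGroup M]
    [Module R M] {i : α → γ} {j : β → γ} (hi : Function.Injective i) (hj : Function.Injective j)
    (h : IsCompl (Set.range i) (Set.range j)) :
    Function.Exact (Finsupp.lmapDomain M R i) (Finsupp.lcomapDomain (R := R) (M := M) j hj) := by
  intro f
  refine Iff.trans ?_ (Finsupp.mem_range_mapDomain_iff i hi f).symm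
  rw [Finsupp.ext_iff]
  refine ⟨fun hf c hc ↦ ?_, fun hf b ↦ hf _ ?_⟩
  · obtain ⟨b, rfl⟩ := h.compl_eq.subset hc
    exact hf b
  · exact h.compl_eq.superset ⟨b, rfl⟩

lemma isCompl_range_natCast_range_negSucc :
    IsCompl (Set.range ((↑) : ℕ → ℤ)) (Set.range Int.negSucc) := by
  refine ⟨Set.disjoint_range_iff.2 nofun, codisjoint_iff_le_sup.2 ?_⟩
  rintro (n | n) -
  exacts [.inl ⟨n, rfl⟩, .inr ⟨n, rfl⟩]

lemma negSucc_injective : Function.Injective Int.negSucc := fun _ _ ↦ Int.negSucc.inj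

variable (R : Type*) [CommRing R] (N : Type*) [AddCommGroup N] [Module R N]

/-- The module `N[X, X⁻¹]` of Laurent polynomials with coefficients in `N`. -/
abbrev LaurentModule : Type _ :=
  AEval' (Finsupp.domLCongr (R := R) (M := N) (Equiv.addRight (1 : ℤ))).toLinearMap

namespace LaurentModule

variable {R N} in
lemma X_smul_bijective : Function.Bijective fun f : LaurentModule R N ↦ (X : R[X]) • f := by
  have X_smul (f : LaurentModule R N) : (X : R[X]) • f = AEval'.of _
      (Finsupp.domLCongr (R := R) (Equiv.addRight (1 : ℤ)) ((AEval'.of _).symm f)) :=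
    (AEval'.of _).symm.injective (AEval.of_symm_X_smul _ f)
  simp_rw [X_smul]
  exact (AEval'.of _).bijective.comp ((LinearEquiv.bijective _).comp (LinearEquiv.bijective _))

/-- The inclusion `N[X] → N[X, X⁻¹]`. -/
def ofPolynomialModule : PolynomialModule R N →ₗ[R[X]] LaurentModule R N :=
  linearMapOfXSMul ((AEval'.of _).toLinearMap ∘ₗ Finsupp.lmapDomain N R ((↑) : ℕ → ℤ) ∘ₗ
      (PolynomialModule.coeffLinearEquiv R R).toLinearMap) fun f ↦ by
    have coeff_X_smul : ((X : R[X]) • f).coeff = f.coeff.mapDomain Nat.succ := by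
      rw [PolynomialModule.smul_def, aeval_X]
      rfl
    refine (AEval'.of _).symm.injective (Eq.trans ?_ (AEval.of_symm_X_smul _ _).symm)
    calc ((X : R[X]) • f).coeff.mapDomain ((↑) : ℕ → ℤ)
      _ = f.coeff.mapDomain fun n : ℕ ↦ (n : ℤ) + 1 := by
        rw [coeff_X_smul, ← Finsupp.mapDomain_comp]
        rfl
      _ = (f.coeff.mapDomain ((↑) : ℕ → ℤ)).equivMapDomain (Equiv.addRight 1) := by
        rw [Finsupp.equivMapDomain_eq_mapDomain, ← Finsupp.mapDomain_comp]
        rfl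

lemma ofPolynomialModule_injective : Function.Injective (ofPolynomialModule R N) :=
  (Finsupp.mapDomain_injective Nat.cast_injective).comp PolynomialModule.coeff_injective

/-- The part of negative degree, `N[X, X⁻¹] → N[X⁻¹]`. -/
def principalPart : LaurentModule R N →ₗ[R[X]] InversePolynomial R N :=
  aevalMap (Finsupp.lcomapDomain Int.negSucc negSucc_injective)
    (LinearMap.ext fun _ ↦ Finsupp.ext fun _ ↦ rfl)

lemma principalPart_surjective : Function.Surjective (principalPart R N) :=
  aevalMap_surjective (Finsupp.comapDomain_surjective negSucc_injective)

lemma exact_ofPolynomialModule_principalPart :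
    Function.Exact (ofPolynomialModule R N) (principalPart R N) :=
  (PolynomialModule.coeffLinearEquiv R R).surjective.comp_exact_iff_exact.2
    (finsupp_exact_lmapDomain_lcomapDomain Nat.cast_injective negSucc_injective
      isCompl_range_natCast_range_negSucc)

end LaurentModule

end Laurent

section LaurentPolynomial

variable (R : Type*) [CommRing R]

instance : IsScalarTower R R[X] (LaurentPolynomial R) :=
  .of_algebraMap_eq fun r ↦ (toLaurent_C r).symm

variable {R} in
lemma coeff_X_smul_laurentPolynomial (f : LaurentPolynomial R) (k : ℤ) :
    ((X : R[X]) • f).coeff (1 + k) = f.coeff k := by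
  rw [Algebra.smul_def, LaurentPolynomial.algebraMap_eq_toLaurent, toLaurent_X]
  exact (AddMonoidAlgebra.coeff_single_mul_add f 1 1 k).trans (one_mul _)

/-- The part of negative degree of a Laurent polynomial. -/
def laurentPrincipalPart : LaurentPolynomial R →ₗ[R[X]] InversePolynomial R R :=
  linearMapOfXSMul ((AEval'.of _).toLinearMap ∘ₗ
      Finsupp.lcomapDomain Int.negSucc negSucc_injective ∘ₗ
      (AddMonoidAlgebra.coeffLinearEquiv R).toLinearMap) fun f ↦ by
    refine InversePolynomial.coeffs.injective (Finsupp.ext fun k ↦ ?_)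
    rw [InversePolynomial.coeffs_X_smul]
    change ((X : R[X]) • f).coeff (Int.negSucc k) = f.coeff (Int.negSucc (k + 1))
    rw [← coeff_X_smul_laurentPolynomial f, Int.negSucc_eq, Int.negSucc_eq]
    lia

lemma laurentPrincipalPart_surjective : Function.Surjective (laurentPrincipalPart R) :=
  (Finsupp.comapDomain_surjective negSucc_injective).comp
    (AddMonoidAlgebra.coeffLinearEquiv R).surjective

lemma exact_toLaurent_laurentPrincipalPart : Function.Exact
    (Algebra.linearMap R[X] (LaurentPolynomial R)) (laurentPrincipalPart R) := by
  have exact_coeff := (toFinsuppIsoLinear R ≪≫ₗ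
    AddMonoidAlgebra.coeffLinearEquiv R).surjective.comp_exact_iff_exact.2
    (finsupp_exact_lmapDomain_lcomapDomain (M := R) (R := R) Nat.cast_injective negSucc_injective
      isCompl_range_natCast_range_negSucc)
  exact fun f ↦ (exact_coeff f.coeff).trans (exists_congr fun p ↦ AddMonoidAlgebra.coeff_inj)

/-- `R[X, X⁻¹] / R[X] = R[X⁻¹]`. -/
def laurentPolynomialQuotientEquiv :
    (LaurentPolynomial R ⧸ LinearMap.range (Algebra.linearMap R[X] (LaurentPolynomial R)))
      ≃ₗ[R[X]] InversePolynomial R R :=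
  (exact_toLaurent_laurentPrincipalPart R).linearEquivOfSurjective
    (laurentPrincipalPart_surjective R)

end LaurentPolynomial

section Tensor

variable (R : Type*) [CommRing R] (M : Type*) [AddCommGroup M] [Module R M]

/-- `M ⊗ (ℤ[X, X⁻¹] / ℤ[X]) = M[X⁻¹]`. -/
def tensorLaurentQuotEquiv :
    TensorProduct ℤ M LaurentQuot ≃ₗ[R] InversePolynomial R M :=
  TensorProduct.AlgebraTensorModule.congr (LinearEquiv.refl R M)
      ((laurentPolynomialQuotientEquiv ℤ).restrictScalars ℤ ≪≫ₗ InversePolynomial.coeffs) ≪≫ₗ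
    TensorProduct.finsuppScalarRight ℤ R M ℕ ≪≫ₗ AEval'.of _

lemma coeffs_tensorLaurentQuotEquiv_tmul (m : M) (q : LaurentQuot) (k : ℕ) :
    InversePolynomial.coeffs (tensorLaurentQuotEquiv R M (m ⊗ₜ q)) k =
      InversePolynomial.coeffs (laurentPolynomialQuotientEquiv ℤ q) k • m :=
  TensorProduct.finsuppScalarRight_apply_tmul_apply _ _ _

lemma tensorLaurentQuotEquiv_lTensor_X (z : TensorProduct ℤ M LaurentQuot) :
    tensorLaurentQuotEquiv R M
        (LinearMap.lTensor M (DistribSMul.toLinearMap ℤ LaurentQuot (X : ℤ[X])) z) =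
      (X : R[X]) • tensorLaurentQuotEquiv R M z := by
  induction z with
  | zero => simp only [map_zero, smul_zero]
  | add z w hz hw => simp only [map_add, smul_add, hz, hw]
  | tmul m q =>
    refine InversePolynomial.coeffs.injective (Finsupp.ext fun k ↦ ?_)
    rw [LinearMap.lTensor_tmul, DistribSMul.toLinearMap_apply,
      InversePolynomial.coeffs_X_smul, coeffs_tensorLaurentQuotEquiv_tmul,
      coeffs_tensorLaurentQuotEquiv_tmul, map_smul, InversePolynomial.coeffs_X_smul]

end Tensor

section PolynomialModule

variable {R : Type u} [CommRing R] (J : Ideal R) (N : Type u) [AddCommGroup N] [Module R N]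

lemma X_smul_polynomialModule_injective :
    Function.Injective fun f : PolynomialModule R N ↦ (X : R[X]) • f := by
  refine Function.Injective.of_comp (f := LaurentModule.ofPolynomialModule R N) ?_
  simp only [Function.comp_def, map_smul]
  exact LaurentModule.X_smul_bijective.injective.comp
    (LaurentModule.ofPolynomialModule_injective R N)

/-- The connecting isomorphism of `0 → N[X] → N[X, X⁻¹] → N[X⁻¹] → 0`, in the middle term of which
`X` is invertible. -/
def extColimitPolynomialModuleEquiv (s : ℕ) :
    ExtColimit (adjoinX J) s (ModuleCat.of R[X] (InversePolynomial R N)) ≃ₗ[R[X]]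
      ExtColimit (adjoinX J) (s + 1) (ModuleCat.of R[X] (PolynomialModule R N)) :=
  have ses := shortExact_of_exact (LaurentModule.ofPolynomialModule_injective R N)
    (LaurentModule.principalPart_surjective R N)
    (LaurentModule.exact_ofPolynomialModule_principalPart R N)
  have (s : ℕ) : Subsingleton (ExtColimit (adjoinX J) s (ModuleCat.of R[X] (LaurentModule R N))) :=
    ExtColimit.subsingleton_of_smul_bijective (X_mem_adjoinX J) s LaurentModule.X_smul_bijective
  LinearEquiv.ofBijective (ExtColimit.δ (adjoinX J) s ses)
    ⟨ExtColimit.δ_injective (adjoinX J) ses, ExtColimit.δ_surjective (adjoinX J) ses⟩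

lemma subsingleton_localCohomology_zero_polynomialModule :
    Subsingleton
      ((localCohomology (adjoinX J) 0).obj (ModuleCat.of R[X] (PolynomialModule R N))) :=
  have := ExtColimit.subsingleton_zero_of_smul_injective (X_mem_adjoinX J)
    (M := ModuleCat.of R[X] (PolynomialModule R N)) (X_smul_polynomialModule_injective N)
  (ExtColimit.equivLocalCohomology (adjoinX J) 0 _).symm.toEquiv.subsingleton

theorem nonempty_localCohomology_polynomialModule_equiv (s : ℕ) :
    Nonempty
      ((localCohomology (adjoinX J) (s + 1)).obj (ModuleCat.of R[X] (PolynomialModule R N)) ≃ₗ[R[X]]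
        InversePolynomial R ((localCohomology J s).obj (ModuleCat.of R N))) := by
  obtain ⟨e⟩ := InversePolynomial.nonempty_extColimit_equiv J s N
  exact ⟨(ExtColimit.equivLocalCohomology (adjoinX J) (s + 1) _).symm ≪≫ₗ
    (extColimitPolynomialModuleEquiv J N s).symm ≪≫ₗ e ≪≫ₗ
    InversePolynomial.congr (ExtColimit.equivLocalCohomology J s (ModuleCat.of R N))⟩

end PolynomialModule

theorem localCohomology_polynomialModule_general {R : Type u} [CommRing R]
    (J : Ideal R) (N : Type u) [AddCommGroup N] [Module R N] :
    Subsingleton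
      ((localCohomology (Ideal.map Polynomial.C J ⊔ Ideal.span {Polynomial.X}) 0).obj
        (ModuleCat.of (Polynomial R) (PolynomialModule R N))) ∧
    ∀ s : ℕ, 1 ≤ s →
      letI : Module R
          ((localCohomology (Ideal.map Polynomial.C J ⊔ Ideal.span {Polynomial.X}) s).obj
            (ModuleCat.of (Polynomial R) (PolynomialModule R N))) :=
        Module.compHom _ (Polynomial.C : R →+* Polynomial R)
      ∃ e : ((localCohomology (Ideal.map Polynomial.C J ⊔ Ideal.span {Polynomial.X}) s).obj
              (ModuleCat.of (Polynomial R) (PolynomialModule R N)))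
            ≃ₗ[R]
            TensorProduct ℤ ((localCohomology J (s - 1)).obj (ModuleCat.of R N)) LaurentQuot,
        ∀ z, e ((Polynomial.X : Polynomial R) • z) =
          (LinearMap.lTensor ((localCohomology J (s - 1)).obj (ModuleCat.of R N))
            (DistribSMul.toLinearMap ℤ LaurentQuot (Polynomial.X : Polynomial ℤ)))
            (e z) := by
  refine ⟨subsingleton_localCohomology_zero_polynomialModule J N, fun s hs ↦ ?_⟩
  obtain ⟨s, rfl⟩ := Nat.exists_eq_add_of_le' hs
  let H := (localCohomology J s).obj (ModuleCat.of R N)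
  let Ht := (localCohomology (adjoinX J) (s + 1)).obj (ModuleCat.of R[X] (PolynomialModule R N))
  let _ : Module R Ht := Module.compHom Ht (C : R →+* R[X])
  have : IsScalarTower R R[X] Ht := .of_algebraMap_smul fun _ _ ↦ rfl
  obtain ⟨e⟩ := nonempty_localCohomology_polynomialModule_equiv J N s
  refine ⟨e.restrictScalars R ≪≫ₗ (tensorLaurentQuotEquiv R H).symm, fun z ↦ ?_⟩
  apply (tensorLaurentQuotEquiv R H).injective
  refine Eq.trans ?_ (tensorLaurentQuotEquiv_lTensor_X R H _).symm
  rw [LinearEquiv.trans_apply, LinearEquiv.trans_apply, LinearEquiv.apply_symm_apply,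
    LinearEquiv.apply_symm_apply]
  exact map_smul e X z

/-- For a Noetherian ring `R`, an ideal `J ⊆ R` and an `R`-module `N`, with
`J̃ = J·R[t] + (t) ⊆ R[t]` and `N[t]` the polynomial module: `H⁰_{J̃}(N[t]) = 0` and
`H^s_{J̃}(N[t]) ≅ H^{s−1}_J(N) ⊗_ℤ (ℤ[t,t⁻¹]/ℤ[t])` for all `s ≥ 1`, the isomorphism
being `R`-linear and intertwining the action of `t` on `N[t]` with the shift action of
`t` on the second tensor factor. -/
theorem localCohomology_polynomialModule {R : Type u} [CommRing R] [IsNoetherianRing R]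
    (J : Ideal R) (N : Type u) [AddCommGroup N] [Module R N] :
    Subsingleton
      ((localCohomology (Ideal.map Polynomial.C J ⊔ Ideal.span {Polynomial.X}) 0).obj
        (ModuleCat.of (Polynomial R) (PolynomialModule R N))) ∧
    ∀ s : ℕ, 1 ≤ s →
      letI : Module R
          ((localCohomology (Ideal.map Polynomial.C J ⊔ Ideal.span {Polynomial.X}) s).obj
            (ModuleCat.of (Polynomial R) (PolynomialModule R N))) :=
        Module.compHom _ (Polynomial.C : R →+* Polynomial R)
      ∃ e : ((localCohomology (Ideal.map Polynomial.C J ⊔ Ideal.span {Polynomial.X}) s).obj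
              (ModuleCat.of (Polynomial R) (PolynomialModule R N)))
            ≃ₗ[R]
            TensorProduct ℤ ((localCohomology J (s - 1)).obj (ModuleCat.of R N)) LaurentQuot,
        ∀ z, e ((Polynomial.X : Polynomial R) • z) =
          (LinearMap.lTensor ((localCohomology J (s - 1)).obj (ModuleCat.of R N))
            (DistribMulAction.toLinearMap ℤ LaurentQuot (Polynomial.X : Polynomial ℤ)))
            (e z) :=
  localCohomology_polynomialModule_general J N

end
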